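/- arXiv:1711.11206 — 6 statements merged into one kernel-verified Lean document; each statement's English description precedes it below -/
import Mathlib

section
/- For every integer k ≥ 1 and every real p with r₁² < p < r₂², one has Ψ_sp(k,p) ≥ (Γ((k+2)/2) / (√π · k · Γ((k+1)/2))) · exp(−(k−1)·R_sp(p)), where Γ denotes the Gamma function. -/
open MeasureTheory Metric

/-- The uniform (normalized surface-area) probability measure on the sphere of radius `r`
centered at the origin in `ℝ^k`, viewed as a measure on the ambient space. -/
noncomputable def sphereUniform (k : ℕ) (r : ℝ) :
    Measure (EuclideanSpace ℝ (Fin k)) :=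
  ((volume : Measure (EuclideanSpace ℝ (Fin k))).toSphere Set.univ)⁻¹ •
    Measure.map
      (fun x : sphere (0 : EuclideanSpace ℝ (Fin k)) 1 => r • (x : EuclideanSpace ℝ (Fin k)))
      (volume : Measure (EuclideanSpace ℝ (Fin k))).toSphere

/-- `Ψ_sp(k,p)`: the probability that a uniform point `Ŝ` on the sphere of radius
`√(k(σ²-D))` satisfies `(1/k)‖s - Ŝ‖² ≤ D`, where `s` is a fixed vector with `‖s‖² = kp`
(here the constant vector with entries `√p`). -/
noncomputable def PsiSp (σ D : ℝ) (k : ℕ) (p : ℝ) : ℝ :=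
  (sphereUniform k (Real.sqrt (k * (σ ^ 2 - D)))
    {x : EuclideanSpace ℝ (Fin k) |
      ‖(EuclideanSpace.equiv (Fin k) ℝ).symm (fun _ => Real.sqrt p) - x‖ ^ 2 ≤ k * D}).toReal

/-- `R_sp(p)` -/
noncomputable def Rsp (σ D p : ℝ) : ℝ :=
  -(1 / 2) * Real.log (1 - (p + σ ^ 2 - 2 * D) ^ 2 / (4 * p * (σ ^ 2 - D)))

/-! The surface area of a spherical cap is at least the volume of the flat disc bounded by its
relative boundary. To see this, compare cones: the solid sector over the cap contains the region
between the cone over the disc with apex at the center of the sphere and the cone over the disc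
with apex at the pole of the cap. Each vertical segment of this region has length `1 - ρ`, where `ρ`
is the relative distance to the axis, so by Cavalieri its volume is that of a cone of height `1`
over the disc, whatever the height of the disc.

By the law of cosines, `Ŝ` satisfies the distortion constraint exactly on a cap whose base disc has
relative radius `exp (-R_sp p)`. -/

open Module Set
open scoped RealInnerProductSpace Pointwise ENNReal

section Suspension

/-- The suspension of the open ball of radius `s` in `V`, placed at height `c` in `V × ℝ`: the
region strictly between the cone over this disc with apex `(0, 0)` and the one with apex `(0, 1)`.
It is the difference of the two solid cones, instead of their union, when `c ∉ [0, 1]`. -/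
def suspension (V : Type*) [NormedAddCommGroup V] (c s : ℝ) : Set (V × ℝ) :=
  regionBetween (fun y => c * (‖y‖ / s)) (fun y => c * (‖y‖ / s) + (1 - ‖y‖ / s)) (ball 0 s)

variable {V : Type*} [NormedAddCommGroup V]

lemma setOf_lt_one_sub_norm_div {s t : ℝ} (hs : 0 < s) :
    {y : V | t < 1 - ‖y‖ / s} = ball 0 ((1 - t) * s) := by
  ext y
  rw [mem_ball_zero_iff, ← div_lt_iff₀ hs, lt_sub_comm]
  rfl

lemma setLIntegral_Ioo_one_sub_pow (n : ℕ) :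
    ∫⁻ t in Ioo (0 : ℝ) 1, ENNReal.ofReal ((1 - t) ^ n) = (n + 1 : ℝ≥0∞)⁻¹ := by
  have h_nonneg : 0 ≤ᵐ[volume.restrict (Ioo (0 : ℝ) 1)] fun t => (1 - t) ^ n := by
    filter_upwards [ae_restrict_mem measurableSet_Ioo] with t ht
    exact pow_nonneg (sub_nonneg.2 ht.2.le) n
  have h_int : IntegrableOn (fun t : ℝ => (1 - t) ^ n) (Ioo 0 1) :=
    (Continuous.integrableOn_Icc (by fun_prop)).mono_set Ioo_subset_Icc_self
  have h_value : ∫ t in Ioo (0 : ℝ) 1, (1 - t) ^ n = ((n : ℝ) + 1)⁻¹ := by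
    rw [← integral_Ioc_eq_integral_Ioo, ← intervalIntegral.integral_of_le zero_le_one,
      intervalIntegral.integral_comp_sub_left (fun x => x ^ n) 1]
    simp
  rw [← ofReal_integral_eq_lintegral_ofReal h_int h_nonneg, h_value,
    ENNReal.ofReal_inv_of_pos (by positivity), ENNReal.ofReal_add n.cast_nonneg zero_le_one,
    ENNReal.ofReal_natCast, ENNReal.ofReal_one]

variable [NormedSpace ℝ V] [FiniteDimensional ℝ V] [MeasurableSpace V] [BorelSpace V]
  (μ : Measure V) [μ.IsAddHaarMeasure]

lemma setLIntegral_ball_one_sub_norm_div (s : ℝ) :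
    ∫⁻ y in ball 0 s, ENNReal.ofReal (1 - ‖y‖ / s) ∂μ =
      (finrank ℝ V + 1 : ℝ≥0∞)⁻¹ * μ (ball 0 s) := by
  rcases le_or_gt s 0 with hs | hs
  · simp [ball_eq_empty.2 hs]
  have h_nonneg : 0 ≤ᵐ[μ.restrict (ball 0 s)] fun y => 1 - ‖y‖ / s := by
    filter_upwards [ae_restrict_mem measurableSet_ball] with y hy
    exact sub_nonneg.2 ((div_le_one hs).2 (mem_ball_zero_iff.1 hy).le)
  have h_level (t : ℝ) (ht : 0 < t) : μ.restrict (ball 0 s) {y | t < 1 - ‖y‖ / s} =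
      (Ioo 0 1).indicator (fun t => ENNReal.ofReal ((1 - t) ^ finrank ℝ V) * μ (ball 0 s)) t := by
    have h_sub : ball (0 : V) ((1 - t) * s) ⊆ ball 0 s := ball_subset_ball (by nlinarith)
    rw [setOf_lt_one_sub_norm_div hs, Measure.restrict_apply measurableSet_ball,
      inter_eq_left.2 h_sub]
    rcases lt_or_ge t 1 with ht1 | ht1
    · rw [indicator_of_mem (mem_Ioo.2 ⟨ht, ht1⟩),
        Measure.addHaar_ball_mul_of_pos μ 0 (sub_pos.2 ht1)]
    · rw [indicator_of_notMem fun h => h.2.not_ge ht1, ball_eq_empty.2 (by nlinarith),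
        measure_empty]
  rw [lintegral_eq_lintegral_meas_lt _ h_nonneg (by fun_prop),
    setLIntegral_congr_fun measurableSet_Ioi h_level, setLIntegral_indicator measurableSet_Ioo,
    inter_eq_left.2 Ioo_subset_Ioi_self, lintegral_mul_const _ (by fun_prop),
    setLIntegral_Ioo_one_sub_pow]

lemma measure_prod_suspension (c s : ℝ) :
    (μ.prod volume) (suspension V c s) = (finrank ℝ V + 1 : ℝ≥0∞)⁻¹ * μ (ball 0 s) := by
  rw [suspension, volume_regionBetween_eq_lintegral' (by fun_prop) (by fun_prop) measurableSet_ball,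
    ← setLIntegral_ball_one_sub_norm_div]
  simp only [Pi.sub_apply, add_sub_cancel_left]

end Suspension

section Sector

variable {E : Type*} [NormedAddCommGroup E] [InnerProductSpace ℝ E]

lemma mul_norm_add_smul_le_inner {u x : E} {c τ : ℝ} (hu : ‖u‖ = 1) (hc : |c| ≤ 1) (hτ : 0 ≤ τ)
    (hx : c * ‖x‖ ≤ ⟪u, x⟫) : c * ‖x + τ • u‖ ≤ ⟪u, x + τ • u⟫ := by
  have h_norm : |‖x + τ • u‖ - ‖x‖| ≤ τ := by
    simpa [norm_smul, hu, abs_of_nonneg hτ] using abs_norm_sub_norm_le (x + τ • u) x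
  have h_diff : c * (‖x + τ • u‖ - ‖x‖) ≤ τ :=
    calc c * (‖x + τ • u‖ - ‖x‖) ≤ |c| * |‖x + τ • u‖ - ‖x‖| := by
          rw [← abs_mul]; exact le_abs_self _
      _ ≤ 1 * τ := by gcongr
      _ = τ := one_mul τ
  rw [inner_add_right, real_inner_smul_right, real_inner_self_eq_norm_sq, hu]
  linarith

lemma toLp_mem_sector_of_mem_suspension {V : Type*} [NormedAddCommGroup V] [InnerProductSpace ℝ V]
    {c s : ℝ} (hcs : c ^ 2 + s ^ 2 = 1) {z : V × ℝ} (hz : z ∈ suspension V c s) :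
    0 < ‖WithLp.toLp 2 z‖ ∧ ‖WithLp.toLp 2 z‖ < 1 ∧ c * ‖WithLp.toLp 2 z‖ ≤ z.2 := by
  obtain ⟨y, t⟩ := z
  obtain ⟨hy, h_lower, h_upper⟩ := hz
  dsimp only at hy h_lower h_upper ⊢
  set ρ := ‖y‖ / s
  set τ := t - c * ρ
  have hs : 0 < s := pos_of_mem_ball hy
  have hρ : 0 ≤ ρ := by positivity
  have hy_norm : ‖y‖ = s * ρ := (mul_div_cancel₀ ‖y‖ hs.ne').symm
  have hτ : 0 < τ := sub_pos.2 h_lower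
  set e : WithLp 2 (V × ℝ) := WithLp.toLp 2 (0, 1)
  set w : WithLp 2 (V × ℝ) := WithLp.toLp 2 (y, c * ρ)
  have he : ‖e‖ = 1 := by simp [e]
  have hw : ‖w‖ = ρ := by
    rw [← sq_eq_sq₀ (norm_nonneg w) hρ, WithLp.prod_norm_sq_eq_of_L2]
    change ‖y‖ ^ 2 + ‖c * ρ‖ ^ 2 = ρ ^ 2
    rw [Real.norm_eq_abs, sq_abs, hy_norm]
    linear_combination ρ ^ 2 * hcs
  have h_inner (y : V) (t : ℝ) : ⟪e, WithLp.toLp 2 (y, t)⟫ = t := by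
    simp [e, WithLp.prod_inner_apply]
  have h_decomp : WithLp.toLp 2 (y, t) = w + τ • e := by
    rw [← WithLp.toLp_smul, ← WithLp.toLp_add]
    simp [τ]
  refine ⟨norm_pos_iff.2 fun h0 => ?_, ?_, ?_⟩
  · have hyt : y = 0 ∧ t = 0 := by simpa using h0
    simp [τ, ρ, hyt] at hτ
  · calc ‖WithLp.toLp 2 (y, t)‖ ≤ ‖w‖ + ‖τ • e‖ := h_decomp ▸ norm_add_le _ _
      _ = ρ + τ := by rw [hw, norm_smul, he, mul_one, Real.norm_of_nonneg hτ.le]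
      _ < 1 := by linarith
  · have hc : |c| ≤ 1 := abs_le_one_iff_mul_self_le_one.2 (by nlinarith)
    have h := mul_norm_add_smul_le_inner he hc hτ.le (by rw [hw, h_inner] : c * ‖w‖ ≤ ⟪e, w⟫)
    rwa [← h_decomp, h_inner] at h

/-- The spherical cap on the unit sphere consisting of the directions whose inner product with `u`
is at least `c`; for a unit vector `u` these are the directions within angle `arccos c` of `u`. -/
def sphericalCap (u : E) (c : ℝ) : Set (sphere (0 : E) 1) :=
  {x | c ≤ ⟪u, x⟫}

lemma measurableSet_sphericalCap [MeasurableSpace E] [BorelSpace E] (u : E) (c : ℝ) :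
    MeasurableSet (sphericalCap u c) :=
  (isClosed_le (by fun_prop) (by fun_prop)).measurableSet

lemma mem_Ioo_smul_sphericalCap {u x : E} {c : ℝ} (hx0 : 0 < ‖x‖) (hx1 : ‖x‖ < 1)
    (hx : c * ‖x‖ ≤ ⟪u, x⟫) :
    x ∈ Ioo (0 : ℝ) 1 • ((↑) '' sphericalCap u c : Set E) := by
  have h_unit : ‖x‖⁻¹ • x ∈ sphere (0 : E) 1 := by
    simp [norm_smul, hx0.ne']
  have h_cap : ⟨_, h_unit⟩ ∈ sphericalCap u c := by
    change c ≤ ⟪u, ‖x‖⁻¹ • x⟫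
    rwa [real_inner_smul_right, inv_mul_eq_div, le_div_iff₀ hx0]
  exact mem_smul.2 ⟨‖x‖, ⟨hx0, hx1⟩, _, mem_image_of_mem _ h_cap, smul_inv_smul₀ hx0.ne' x⟩

lemma exists_linearIsometryEquiv_apply_eq {F : Type*} [NormedAddCommGroup F]
    [InnerProductSpace ℝ F] [FiniteDimensional ℝ E] [FiniteDimensional ℝ F]
    (h : finrank ℝ E = finrank ℝ F) {e : E} {u : F} (heu : ‖e‖ = ‖u‖) :
    ∃ L : E ≃ₗᵢ[ℝ] F, L e = u := by
  let L₀ : E ≃ₗᵢ[ℝ] F := (stdOrthonormalBasis ℝ E).equiv (stdOrthonormalBasis ℝ F) (finCongr h)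
  exact ⟨L₀.trans (ℝ ∙ (L₀ e - u))ᗮ.reflection,
    Submodule.reflection_sub ((L₀.norm_map e).trans heu)⟩

theorem volume_ball_le_toSphere_sphericalCap {V : Type*} [NormedAddCommGroup V]
    [InnerProductSpace ℝ V] [FiniteDimensional ℝ V] [MeasurableSpace V] [BorelSpace V]
    [FiniteDimensional ℝ E] [MeasurableSpace E] [BorelSpace E]
    (hE : finrank ℝ E = finrank ℝ V + 1) {u : E} (hu : ‖u‖ = 1) {c s : ℝ}
    (hcs : c ^ 2 + s ^ 2 = 1) :
    volume (ball (0 : V) s) ≤ (volume : Measure E).toSphere (sphericalCap u c) := by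
  set e : WithLp 2 (V × ℝ) := WithLp.toLp 2 (0, 1)
  have he : ‖e‖ = ‖u‖ := by simp [e, hu]
  have h_finrank : finrank ℝ (WithLp 2 (V × ℝ)) = finrank ℝ E := by
    rw [(WithLp.linearEquiv 2 ℝ (V × ℝ)).finrank_eq, hE, finrank_prod, finrank_self]
  obtain ⟨L, hL⟩ := exists_linearIsometryEquiv_apply_eq h_finrank he
  have h_preserving : MeasurePreserving (fun z : V × ℝ => L (WithLp.toLp 2 z)) :=
    L.measurePreserving.comp (WithLp.volume_preserving_toLp V ℝ)
  have h_subset : suspension V c s ⊆ (fun z => L (WithLp.toLp 2 z)) ⁻¹'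
      (Ioo (0 : ℝ) 1 • ((↑) '' sphericalCap u c : Set E)) := by
    intro z hz
    have h_inner : ⟪u, L (WithLp.toLp 2 z)⟫ = z.2 := by
      rw [← hL, L.inner_map_map]
      simp [e, WithLp.prod_inner_apply]
    obtain ⟨h_pos, h_lt, h_le⟩ := toLp_mem_sector_of_mem_suspension hcs hz
    rw [← L.norm_map] at h_pos h_lt h_le
    exact mem_Ioo_smul_sphericalCap h_pos h_lt (h_inner ▸ h_le)
  have h_dim : (finrank ℝ E : ℝ≥0∞) = finrank ℝ V + 1 := by
    rw [hE, Nat.cast_add_one]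
  calc volume (ball (0 : V) s)
      = finrank ℝ E * volume (suspension V c s) := by
        rw [Measure.volume_eq_prod, measure_prod_suspension, h_dim,
          ENNReal.mul_inv_cancel_left (by simp) (by finiteness)]
    _ ≤ finrank ℝ E * volume (Ioo (0 : ℝ) 1 • ((↑) '' sphericalCap u c : Set E)) := by
        gcongr
        exact (measure_mono h_subset).trans (h_preserving.measure_preimage_le _)
    _ = (volume : Measure E).toSphere (sphericalCap u c) :=
        (Measure.toSphere_apply' _ (measurableSet_sphericalCap u c)).symm

lemma preimage_smul_setOf_norm_sub_sq_le {v : E} (hv : v ≠ 0) {r : ℝ} (hr : 0 < r) (d : ℝ) :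
    (fun x : sphere (0 : E) 1 => r • (x : E)) ⁻¹' {x | ‖v - x‖ ^ 2 ≤ d} =
      sphericalCap (‖v‖⁻¹ • v) ((‖v‖ ^ 2 + r ^ 2 - d) / (2 * ‖v‖ * r)) := by
  ext x
  have h_cosine : ‖v - r • (x : E)‖ ^ 2 = ‖v‖ ^ 2 - 2 * r * ⟪v, x⟫ + r ^ 2 := by
    rw [norm_sub_sq_real, real_inner_smul_right, norm_smul, norm_eq_of_mem_sphere, mul_one,
      Real.norm_of_nonneg hr.le]
    ring
  have h_scale : ⟪‖v‖⁻¹ • v, (x : E)⟫ = 2 * r * ⟪v, x⟫ / (2 * ‖v‖ * r) := by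
    rw [real_inner_smul_left]
    field_simp
  change _ ≤ d ↔ _ ≤ ⟪_, _⟫
  rw [h_cosine, h_scale, div_le_div_iff_of_pos_right (by positivity)]
  constructor <;> intro h <;> linarith

end Sector

section Euclidean

lemma volume_real_euclideanSpace_ball (n : ℕ) {r : ℝ} (hr : 0 < r) :
    volume.real (ball (0 : EuclideanSpace ℝ (Fin n)) r) =
      r ^ n * (√Real.pi ^ n / Real.Gamma (n / 2 + 1)) := by
  rcases n with _ | n
  · rw [measureReal_def, volume_euclideanSpace_eq_dirac,
      Measure.dirac_apply_of_mem (mem_ball_self hr)]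
    simp
  · rw [measureReal_def, EuclideanSpace.volume_ball, Fintype.card_fin, ENNReal.toReal_mul,
      ENNReal.toReal_pow, ENNReal.toReal_ofReal hr.le, ENNReal.toReal_ofReal]
    exact div_nonneg (by positivity) (Real.Gamma_nonneg_of_nonneg (by positivity))

lemma sphereUniform_real_apply (k : ℕ) (r : ℝ) {S : Set (EuclideanSpace ℝ (Fin k))}
    (hS : MeasurableSet S) :
    (sphereUniform k r).real S =
      ((volume : Measure (EuclideanSpace ℝ (Fin k))).toSphere.real
        ((fun x : sphere (0 : EuclideanSpace ℝ (Fin k)) 1 => r • (x : EuclideanSpace ℝ (Fin k)))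
          ⁻¹' S)) / (volume : Measure (EuclideanSpace ℝ (Fin k))).toSphere.real univ := by
  rw [sphereUniform, measureReal_ennreal_smul_apply, map_measureReal_apply (by fun_prop) hS,
    ENNReal.toReal_inv, inv_mul_eq_div, ← measureReal_def]

lemma le_toSphere_real_sphericalCap_div {n : ℕ} {u : EuclideanSpace ℝ (Fin (n + 1))}
    (hu : ‖u‖ = 1) {c s : ℝ} (hs : 0 < s) (hcs : c ^ 2 + s ^ 2 = 1) :
    Real.Gamma ((n + 1 : ℕ) / 2 + 1) / (√Real.pi * (n + 1 : ℕ) * Real.Gamma (n / 2 + 1)) * s ^ n ≤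
      (volume : Measure (EuclideanSpace ℝ (Fin (n + 1)))).toSphere.real (sphericalCap u c) /
        (volume : Measure (EuclideanSpace ℝ (Fin (n + 1)))).toSphere.real univ := by
  have h_cap : volume.real (ball (0 : EuclideanSpace ℝ (Fin n)) s) ≤
      (volume : Measure (EuclideanSpace ℝ (Fin (n + 1)))).toSphere.real (sphericalCap u c) :=
    ENNReal.toReal_mono (measure_ne_top _ _)
      (volume_ball_le_toSphere_sphericalCap (by simp) hu hcs)
  calc _ = volume.real (ball (0 : EuclideanSpace ℝ (Fin n)) s) /
        (volume : Measure (EuclideanSpace ℝ (Fin (n + 1)))).toSphere.real univ := by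
        rw [Measure.toSphere_real_apply_univ, finrank_euclideanSpace_fin,
          volume_real_euclideanSpace_ball n hs, volume_real_euclideanSpace_ball (n + 1) one_pos]
        field_simp
        ring
    _ ≤ _ := by gcongr

end Euclidean

section Rate

/-- The cosine of the angular radius of the cap of points `Ŝ` with `‖s - Ŝ‖² ≤ k D`, where
`‖s‖² = k p` and `‖Ŝ‖² = k (σ² - D)`. -/
noncomputable def capCos (σ D p : ℝ) : ℝ :=
  (p + σ ^ 2 - 2 * D) / (2 * √p * √(σ ^ 2 - D))

variable {σ D p : ℝ}

lemma capCos_sq (hp : 0 ≤ p) (hDσ : D ≤ σ ^ 2) :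
    capCos σ D p ^ 2 = (p + σ ^ 2 - 2 * D) ^ 2 / (4 * p * (σ ^ 2 - D)) := by
  rw [capCos, div_pow, mul_pow, mul_pow, Real.sq_sqrt hp, Real.sq_sqrt (sub_nonneg.2 hDσ)]
  norm_num

lemma capCos_sq_lt_one (hD : 0 ≤ D) (hDσ : D < σ ^ 2) (hp1 : (√(σ ^ 2 - D) - √D) ^ 2 < p)
    (hp2 : p < (√(σ ^ 2 - D) + √D) ^ 2) : capCos σ D p ^ 2 < 1 := by
  have hp : 0 < p := (sq_nonneg _).trans_lt hp1
  have hDσ' : 0 < σ ^ 2 - D := sub_pos.2 hDσ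
  rw [capCos_sq hp.le hDσ.le, div_lt_one (by positivity), ← sub_pos]
  -- Heron's formula for the triangle with side lengths `√p`, `√(σ² - D)` and `√D`.
  have h_heron : 4 * p * (σ ^ 2 - D) - (p + σ ^ 2 - 2 * D) ^ 2 =
      (p - (√(σ ^ 2 - D) - √D) ^ 2) * ((√(σ ^ 2 - D) + √D) ^ 2 - p) := by
    calc 4 * p * (σ ^ 2 - D) - (p + σ ^ 2 - 2 * D) ^ 2
        = 4 * p * √(σ ^ 2 - D) ^ 2 - (p + √(σ ^ 2 - D) ^ 2 - √D ^ 2) ^ 2 := by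
          rw [Real.sq_sqrt hDσ'.le, Real.sq_sqrt hD]
          ring
      _ = _ := by ring
  rw [h_heron]
  exact mul_pos (sub_pos.2 hp1) (sub_pos.2 hp2)

lemma exp_neg_mul_Rsp (hp : 0 ≤ p) (hDσ : D ≤ σ ^ 2) (hc : capCos σ D p ^ 2 < 1) (n : ℕ) :
    Real.exp (-n * Rsp σ D p) = √(1 - capCos σ D p ^ 2) ^ n := by
  have hs : 0 < 1 - capCos σ D p ^ 2 := sub_pos.2 hc
  rw [Rsp, ← capCos_sq hp hDσ, ← Real.exp_log (Real.sqrt_pos.2 hs), ← Real.exp_nat_mul,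
    Real.log_sqrt hs.le]
  congr 1
  ring

lemma exists_PsiSp_eq_toSphere_sphericalCap_div (hDσ : D < σ ^ 2) (hp : 0 < p) {k : ℕ}
    (hk : 0 < k) :
    ∃ u : EuclideanSpace ℝ (Fin k), ‖u‖ = 1 ∧ PsiSp σ D k p =
      (volume : Measure (EuclideanSpace ℝ (Fin k))).toSphere.real
        (sphericalCap u (capCos σ D p)) /
      (volume : Measure (EuclideanSpace ℝ (Fin k))).toSphere.real univ := by
  set v := (EuclideanSpace.equiv (Fin k) ℝ).symm fun _ => √p with hv
  have hk' : (0 : ℝ) < k := Nat.cast_pos.2 hk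
  have hDσ' : 0 < σ ^ 2 - D := sub_pos.2 hDσ
  have h_norm : ‖v‖ = √(k * p) := by
    simp [hv, EuclideanSpace.norm_eq, Real.sq_sqrt hp.le]
  have hv0 : v ≠ 0 := norm_pos_iff.1 (h_norm ▸ Real.sqrt_pos.2 (by positivity))
  have h_meas : MeasurableSet {x | ‖v - x‖ ^ 2 ≤ k * D} :=
    measurableSet_le (by fun_prop) (by fun_prop)
  have h_cos : (‖v‖ ^ 2 + √(k * (σ ^ 2 - D)) ^ 2 - k * D) / (2 * ‖v‖ * √(k * (σ ^ 2 - D))) =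
      capCos σ D p := by
    rw [h_norm, capCos, Real.sq_sqrt (by positivity), Real.sq_sqrt (by positivity),
      Real.sqrt_mul hk'.le, Real.sqrt_mul hk'.le]
    field_simp
    rw [Real.sq_sqrt hk'.le]
    ring
  refine ⟨‖v‖⁻¹ • v, by simp [norm_smul, hv0], ?_⟩
  rw [PsiSp, ← measureReal_def, sphereUniform_real_apply _ _ h_meas,
    preimage_smul_setOf_norm_sub_sq_le hv0 (Real.sqrt_pos.2 (by positivity)), h_cos]

end Rate

theorem stmt1 (σ D : ℝ) (hσ : 0 < σ) (hD : 0 < D) (hDσ : D < σ ^ 2)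
    (k : ℕ) (hk : 1 ≤ k) (p : ℝ)
    (hp1 : (Real.sqrt (σ ^ 2 - D) - Real.sqrt D) ^ 2 < p)
    (hp2 : p < (Real.sqrt (σ ^ 2 - D) + Real.sqrt D) ^ 2) :
    PsiSp σ D k p ≥
      Real.Gamma (((k : ℝ) + 2) / 2) / (Real.sqrt Real.pi * k * Real.Gamma (((k : ℝ) + 1) / 2)) *
        Real.exp (-((k : ℝ) - 1) * Rsp σ D p) := by
  obtain ⟨n, rfl⟩ := Nat.exists_eq_add_of_le' hk
  have hp : 0 < p := (sq_nonneg _).trans_lt hp1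
  have hc : capCos σ D p ^ 2 < 1 := capCos_sq_lt_one hD.le hDσ hp1 hp2
  have hs : 0 < 1 - capCos σ D p ^ 2 := sub_pos.2 hc
  have hcs : capCos σ D p ^ 2 + √(1 - capCos σ D p ^ 2) ^ 2 = 1 := by
    rw [Real.sq_sqrt hs.le, add_sub_cancel]
  obtain ⟨u, hu, h_Psi⟩ := exists_PsiSp_eq_toSphere_sphericalCap_div hDσ hp hk
  have h_exp : Real.exp (-(((n + 1 : ℕ) : ℝ) - 1) * Rsp σ D p) = √(1 - capCos σ D p ^ 2) ^ n := by
    rw [← exp_neg_mul_Rsp hp.le hDσ.le hc, Nat.cast_add_one, add_sub_cancel_right]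
  have h_num : (((n + 1 : ℕ) : ℝ) + 2) / 2 = (n + 1 : ℕ) / 2 + 1 := by ring
  have h_den : (((n + 1 : ℕ) : ℝ) + 1) / 2 = n / 2 + 1 := by push_cast; ring
  rw [h_Psi, h_exp, h_num, h_den]
  exact le_toSphere_real_sphericalCap_div hu (Real.sqrt_pos.2 hs) hcs
end

section
/- The function R_sp is strictly increasing above the point |σ²−2D|: for all real numbers p, p' with r₁² < p, |σ²−2D| ≤ p, and p < p' < r₂², one has R_sp(p) < R_sp(p'). -/
theorem heron_factorisation {R : Type*} [CommRing R] (a b p : R) :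
    4 * p * a ^ 2 - (p + a ^ 2 - b ^ 2) ^ 2 = (p - (a - b) ^ 2) * ((a + b) ^ 2 - p) := by
  ring

theorem strictMonoOn_add_sq_div_self {K : Type*} [Field K] [LinearOrder K] [IsStrictOrderedRing K]
    (c : K) : StrictMonoOn (fun x ↦ (x + c) ^ 2 / x) (Set.Ioi 0 ∩ Set.Ici |c|) := by
  rintro x ⟨hx : 0 < x, hcx : |c| ≤ x⟩ y ⟨hy : 0 < y, -⟩ hxy
  have sq_lt_mul : c ^ 2 < x * y :=
    calc c ^ 2 ≤ x ^ 2 := sq_le_sq.2 (hcx.trans (le_abs_self x))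
      _ = x * x := sq x
      _ < x * y := mul_lt_mul_of_pos_left hxy hx
  have sub_eq : (y + c) ^ 2 / y - (x + c) ^ 2 / x = (y - x) * (x * y - c ^ 2) / (x * y) := by
    field_simp
    ring
  refine sub_pos.1 (sub_eq ▸ ?_)
  exact div_pos (mul_pos (sub_pos.2 hxy) (sub_pos.2 sq_lt_mul)) (mul_pos hx hy)

/-- The squared correlation coefficient of two centred random variables of variances `s` and `p`
whose difference has second moment `d`, written through their covariance `(p + s - d) / 2`. -/
noncomputable def sqCorrelation (s d p : ℝ) : ℝ :=
  (p + s - d) ^ 2 / (4 * p * s)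

theorem sqCorrelation_lt_one {s d p : ℝ} (hs : 0 < s) (hd : 0 ≤ d)
    (hp₁ : (√s - √d) ^ 2 < p) (hp₂ : p < (√s + √d) ^ 2) : sqCorrelation s d p < 1 := by
  have hp : 0 < p := (sq_nonneg _).trans_lt hp₁
  have heron : 4 * p * s - (p + s - d) ^ 2 = (p - (√s - √d) ^ 2) * ((√s + √d) ^ 2 - p) := by
    simpa only [Real.sq_sqrt hs.le, Real.sq_sqrt hd] using heron_factorisation (√s) (√d) p
  rw [sqCorrelation, div_lt_one (by positivity), ← sub_pos, heron]
  exact mul_pos (sub_pos.2 hp₁) (sub_pos.2 hp₂)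

theorem sqCorrelation_strictMonoOn {s : ℝ} (hs : 0 < s) (d : ℝ) :
    StrictMonoOn (sqCorrelation s d) (Set.Ioi 0 ∩ Set.Ici |s - d|) := by
  have sqCorrelation_eq (p : ℝ) : sqCorrelation s d p = (p + (s - d)) ^ 2 / p / (4 * s) := by
    rw [sqCorrelation, add_sub_assoc, div_div, mul_left_comm, mul_assoc]
  intro p hp q hq hpq
  rw [sqCorrelation_eq, sqCorrelation_eq]
  exact div_lt_div_of_pos_right (strictMonoOn_add_sq_div_self (s - d) hp hq hpq) (by positivity)

/-- The mutual information, in nats, of two jointly Gaussian real random variables, as a function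
of their squared correlation coefficient `r`. -/
noncomputable def gaussianMutualInfo (r : ℝ) : ℝ :=
  -(1 / 2) * Real.log (1 - r)

theorem gaussianMutualInfo_strictMonoOn : StrictMonoOn gaussianMutualInfo (Set.Iio 1) := by
  intro r _ t ht hrt
  have log_lt : Real.log (1 - t) < Real.log (1 - r) :=
    Real.log_lt_log (sub_pos.2 ht) (sub_lt_sub_left hrt 1)
  exact mul_lt_mul_of_neg_left log_lt (by norm_num)

theorem Rsp_eq_gaussianMutualInfo (σ D p : ℝ) :
    Rsp σ D p = gaussianMutualInfo (sqCorrelation (σ ^ 2 - D) D p) := by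
  have numerator_eq : p + σ ^ 2 - 2 * D = p + (σ ^ 2 - D) - D := by ring
  rw [Rsp, gaussianMutualInfo, sqCorrelation, numerator_eq]

theorem stmt3 (σ D : ℝ) (hσ : 0 < σ) (hD : 0 < D) (hDσ : D < σ ^ 2)
    (p p' : ℝ)
    (hp1 : (Real.sqrt (σ ^ 2 - D) - Real.sqrt D) ^ 2 < p)
    (hp2 : |σ ^ 2 - 2 * D| ≤ p)
    (hpp' : p < p')
    (hp'2 : p' < (Real.sqrt (σ ^ 2 - D) + Real.sqrt D) ^ 2) :
    Rsp σ D p < Rsp σ D p' := by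
  have hs : 0 < σ ^ 2 - D := sub_pos.2 hDσ
  have hp : 0 < p := (sq_nonneg _).trans_lt hp1
  have hcp : |σ ^ 2 - D - D| ≤ p := by rwa [sub_sub, ← two_mul]
  have corr_lt : sqCorrelation (σ ^ 2 - D) D p < sqCorrelation (σ ^ 2 - D) D p' :=
    sqCorrelation_strictMonoOn hs D ⟨hp, hcp⟩ ⟨hp.trans hpp', hcp.trans hpp'.le⟩ hpp'
  have corr_lt_one : sqCorrelation (σ ^ 2 - D) D p' < 1 :=
    sqCorrelation_lt_one hs hD.le (hp1.trans hpp') hp'2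
  rw [Rsp_eq_gaussianMutualInfo, Rsp_eq_gaussianMutualInfo]
  exact gaussianMutualInfo_strictMonoOn (corr_lt.trans corr_lt_one) corr_lt_one corr_lt
end

section
/- The function R_iid is strictly increasing above the point max{0, 2D−σ²}: for all real numbers p, p' with max{0, 2D−σ²} ≤ p < p', one has R_iid(p) < R_iid(p'). -/
/-- `s*(p)` -/
noncomputable def sStar (σ D p : ℝ) : ℝ :=
  max 0 ((σ ^ 2 - 3 * D + Real.sqrt ((σ ^ 2 - D) ^ 2 + 4 * p * D)) / (4 * D))

/-- `R_iid(p)` -/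
noncomputable def Riid (σ D p : ℝ) : ℝ :=
  (1 / 2) * Real.log (1 + 2 * sStar σ D p) +
    sStar σ D p * p / ((1 + 2 * sStar σ D p) * (σ ^ 2 - D)) -
    sStar σ D p * D / (σ ^ 2 - D)

/-!
For a free parameter `s` let `F(p, s)` be the expression that gives `R_iid(p)` at `s = s*(p)`, and
put `A = σ² - D`. Setting `∂F/∂s = 0` gives `D (1 + 2s)² = A (1 + 2s) + p`, whose larger root is
`s*(p)` as soon as `2D - σ² ≤ p`. For fixed `s ≥ 0` the function `F` is nondecreasing in `p`, and
`F(p', s) < F(p', s*(p'))` for `s = s*(p) < s*(p')`, because the logarithmic mean of two positive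
numbers is less than their arithmetic mean. Hence
`R_iid(p) = F(p, s*(p)) ≤ F(p', s*(p)) < F(p', s*(p')) = R_iid(p')`.
-/

open Real Set

lemma two_mul_sub_div_add_lt_log_sub_log {x y : ℝ} (hx : 0 < x) (hxy : x < y) :
    2 * (y - x) / (x + y) < log y - log x := by
  have hy : 0 < y := hx.trans hxy
  have hratio : 0 < y / x - 1 := sub_pos.2 ((one_lt_div hx).2 hxy)
  have hden : y / x - 1 + 2 = (x + y) / x := by
    field_simp
    ring
  calc 2 * (y - x) / (x + y) = 2 * (y / x - 1) / (y / x - 1 + 2) := by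
        rw [hden]
        field_simp
    _ < log (1 + (y / x - 1)) := lt_log_one_add_of_pos hratio
    _ = log y - log x := by rw [add_sub_cancel, log_div hy.ne' hx.ne']

/-- The expression `F(p, s)` that equals `R_iid(p)` at `s = s*(p)`, with `s` a free parameter and
`A` in place of `σ² - D`. -/
noncomputable def rateObjective (A D p s : ℝ) : ℝ :=
  (1 / 2) * log (1 + 2 * s) + s * p / ((1 + 2 * s) * A) - s * D / A

section RateObjective

variable {A D p s t : ℝ}

lemma rateObjective_monotone (hA : 0 ≤ A) (hs : 0 ≤ s) :
    Monotone fun p ↦ rateObjective A D p s := by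
  intro p p' hpp'
  simp only [rateObjective]
  gcongr

lemma rateObjective_sub_eq_of_critical (hA : A ≠ 0) (hs : 0 < 1 + 2 * s) (ht : 0 < 1 + 2 * t)
    (hcrit : D * (1 + 2 * t) ^ 2 = A * (1 + 2 * t) + p) :
    rateObjective A D p t - rateObjective A D p s =
      (log (1 + 2 * t) - log (1 + 2 * s) -
          2 * (1 + 2 * t - (1 + 2 * s)) / (1 + 2 * s + (1 + 2 * t))) / 2 +
        2 * (t - s) ^ 2 * (D * (1 + 2 * s + (1 + 2 * t)) - A) /
          (A * (1 + 2 * s) * (1 + 2 * s + (1 + 2 * t))) := by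
  have hsum : 1 + 2 * s + (1 + 2 * t) ≠ 0 := (add_pos hs ht).ne'
  obtain rfl : p = D * (1 + 2 * t) ^ 2 - A * (1 + 2 * t) := by linarith
  simp only [rateObjective]
  field_simp
  ring

lemma rateObjective_lt_of_critical (hA : 0 < A) (hs : 0 < 1 + 2 * s) (hst : s < t)
    (hcrit : D * (1 + 2 * t) ^ 2 = A * (1 + 2 * t) + p)
    (hsum : A ≤ D * (1 + 2 * s + (1 + 2 * t))) :
    rateObjective A D p s < rateObjective A D p t := by
  have huv : 1 + 2 * s < 1 + 2 * t := by gcongr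
  have ht : 0 < 1 + 2 * t := hs.trans huv
  have hlog := two_mul_sub_div_add_lt_log_sub_log hs huv
  have hrem : 0 ≤ 2 * (t - s) ^ 2 * (D * (1 + 2 * s + (1 + 2 * t)) - A) /
      (A * (1 + 2 * s) * (1 + 2 * s + (1 + 2 * t))) :=
    div_nonneg (mul_nonneg (by positivity) (sub_nonneg.2 hsum)) (by positivity)
  have hdiff := rateObjective_sub_eq_of_critical hA.ne' hs ht hcrit
  linarith

end RateObjective

section SStar

variable {σ D p : ℝ}

lemma sStar_nonneg : 0 ≤ sStar σ D p := le_max_left _ _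

lemma sq_three_mul_sub_sq_le_discriminant (hD : 0 ≤ D) (hp : 2 * D - σ ^ 2 ≤ p) :
    (3 * D - σ ^ 2) ^ 2 ≤ (σ ^ 2 - D) ^ 2 + 4 * p * D := by
  linear_combination 4 * mul_le_mul_of_nonneg_right hp hD

lemma one_add_two_mul_sStar (hD : 0 < D) (hp : 2 * D - σ ^ 2 ≤ p) :
    1 + 2 * sStar σ D p = (σ ^ 2 - D + √((σ ^ 2 - D) ^ 2 + 4 * p * D)) / (2 * D) := by
  have hroot : 3 * D - σ ^ 2 ≤ √((σ ^ 2 - D) ^ 2 + 4 * p * D) :=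
    le_sqrt_of_sq_le (sq_three_mul_sub_sq_le_discriminant hD.le hp)
  rw [sStar, max_eq_right (div_nonneg (by linarith) (by positivity))]
  field_simp
  ring

lemma sStar_critical (hD : 0 < D) (hp : 2 * D - σ ^ 2 ≤ p) :
    D * (1 + 2 * sStar σ D p) ^ 2 = (σ ^ 2 - D) * (1 + 2 * sStar σ D p) + p := by
  have hsq := sq_sqrt ((sq_nonneg _).trans (sq_three_mul_sub_sq_le_discriminant hD.le hp))
  rw [one_add_two_mul_sStar hD hp]
  generalize √((σ ^ 2 - D) ^ 2 + 4 * p * D) = r at hsq ⊢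
  field_simp
  linear_combination hsq

lemma le_two_mul_one_add_two_mul_sStar (hD : 0 < D) :
    σ ^ 2 - D ≤ 2 * D * (1 + 2 * sStar σ D p) := by
  have hroot : (σ ^ 2 - 3 * D + √((σ ^ 2 - D) ^ 2 + 4 * p * D)) / (4 * D) ≤ sStar σ D p :=
    le_max_right _ _
  rw [div_le_iff₀ (by positivity)] at hroot
  linarith [sqrt_nonneg ((σ ^ 2 - D) ^ 2 + 4 * p * D)]

lemma sStar_strictMonoOn (hD : 0 < D) : StrictMonoOn (sStar σ D) (Ici (2 * D - σ ^ 2)) := by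
  intro p hp p' hp' hpp'
  have hdisc := (sq_nonneg _).trans (sq_three_mul_sub_sq_le_discriminant hD.le hp)
  have hlt : 1 + 2 * sStar σ D p < 1 + 2 * sStar σ D p' := by
    rw [one_add_two_mul_sStar hD hp, one_add_two_mul_sStar hD hp']
    gcongr
  linarith

end SStar

theorem stmt6_general {σ D : ℝ} (hD : 0 < D) (hDσ : D < σ ^ 2) :
    StrictMonoOn (Riid σ D) (Ici (2 * D - σ ^ 2)) := by
  intro p hp p' hp' hpp'
  have hA : 0 < σ ^ 2 - D := sub_pos.2 hDσ
  have hs : 0 ≤ sStar σ D p := sStar_nonneg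
  have hsum : σ ^ 2 - D ≤ D * (1 + 2 * sStar σ D p + (1 + 2 * sStar σ D p')) := by
    linarith [le_two_mul_one_add_two_mul_sStar (σ := σ) (p := p) hD,
      le_two_mul_one_add_two_mul_sStar (σ := σ) (p := p') hD]
  calc Riid σ D p = rateObjective (σ ^ 2 - D) D p (sStar σ D p) := rfl
    _ ≤ rateObjective (σ ^ 2 - D) D p' (sStar σ D p) := rateObjective_monotone hA.le hs hpp'.le
    _ < rateObjective (σ ^ 2 - D) D p' (sStar σ D p') :=
      rateObjective_lt_of_critical hA (by positivity) (sStar_strictMonoOn hD hp hp' hpp')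
        (sStar_critical hD hp') hsum
    _ = Riid σ D p' := rfl

theorem stmt6 (σ D : ℝ) (hσ : 0 < σ) (hD : 0 < D) (hDσ : D < σ ^ 2)
    (p p' : ℝ) (hp : max 0 (2 * D - σ ^ 2) ≤ p) (hpp' : p < p') :
    Riid σ D p < Riid σ D p' :=
  have hle : 2 * D - σ ^ 2 ≤ p := (le_max_right _ _).trans hp
  stmt6_general hD hDσ hle (hle.trans hpp'.le) hpp'
end

section
/- The function R_sp admits the Taylor expansion R_sp(p) = (1/2)·log(σ²/D) + (p−σ²)/(2σ²) + O((p−σ²)²) as p → σ²: there exist δ > 0 and C > 0 such that for every p with |p − σ²| < δ (in particular r₁² < p < r₂²), one has |R_sp(p) − (1/2)·log(σ²/D) − (p−σ²)/(2σ²)| ≤ C·(p−σ²)². -/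
/-!
Completing the square turns the argument of the logarithm in `R_sp` into
`(4 D (σ² - D) - (p - σ²)²) / (4 (σ² - D) p)`, and the condition `r₁² < p < r₂²` says exactly that
this numerator is positive. So `R_sp` is analytic on `(r₁², r₂²)`, an interval centred at `σ²`, and
the expansion is its first-order Taylor formula there; at `p = σ²` the square contributes to
neither the value nor the derivative.
-/

open Asymptotics Filter Set Topology

theorem isBigO_sub_sub_fderiv_of_analyticAt {𝕜 E F : Type*} [NontriviallyNormedField 𝕜]
    [NormedAddCommGroup E] [NormedSpace 𝕜 E] [NormedAddCommGroup F] [NormedSpace 𝕜 F]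
    {f : E → F} {f' : E →L[𝕜] F} {a : E} (hf : AnalyticAt 𝕜 f a) (hf' : HasFDerivAt f f' a) :
    (fun x ↦ f x - f a - f' (x - a)) =O[𝓝 a] fun x ↦ ‖x - a‖ ^ 2 := by
  obtain ⟨P, hP⟩ := hf
  have hP₁ (y : E) : P 1 (fun _ ↦ y) = f' y := by
    rw [hf'.unique hP.hasFDerivAt, continuousMultilinearCurryFin1_apply]
    congr 1
  have hP₂ (y : E) : P.partialSum 2 y = f a + f' y := by
    rw [FormalMultilinearSeries.partialSum, Finset.sum_range_succ, Finset.sum_range_one,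
      hP.coeff_zero, hP₁]
  have htendsto : Tendsto (fun x ↦ x - a) (𝓝 a) (𝓝 0) := tendsto_sub_nhds_zero_iff.2 tendsto_id
  simpa only [Function.comp_def, add_sub_cancel, hP₂, sub_add_eq_sub_sub] using
    (hP.isBigO_sub_partialSum_pow 2).comp_tendsto htendsto

/-- The interval `(r₁², r₂²)` on which `R_sp` is considered. -/
def spInterval (σ D : ℝ) : Set ℝ :=
  Ioo ((√(σ ^ 2 - D) - √D) ^ 2) ((√(σ ^ 2 - D) + √D) ^ 2)

section

variable {σ D p : ℝ}

theorem isOpen_spInterval : IsOpen (spInterval σ D) :=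
  isOpen_Ioo

theorem pos_of_mem_spInterval (hp : p ∈ spInterval σ D) : 0 < p :=
  (sq_nonneg _).trans_lt hp.1

theorem mem_spInterval_iff (hD : 0 ≤ D) (hDσ : D ≤ σ ^ 2) :
    p ∈ spInterval σ D ↔ (p - σ ^ 2) ^ 2 < 4 * D * (σ ^ 2 - D) := by
  have hsqD := Real.sq_sqrt hD
  have hsqσD := Real.sq_sqrt (sub_nonneg.2 hDσ)
  have hradius : 4 * D * (σ ^ 2 - D) = (2 * √(σ ^ 2 - D) * √D) ^ 2 := by
    rw [mul_pow, mul_pow, hsqD, hsqσD]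
    ring
  rw [hradius, sq_lt_sq, abs_of_nonneg (by positivity : 0 ≤ 2 * √(σ ^ 2 - D) * √D), abs_lt,
    spInterval, mem_Ioo, sub_sq, add_sq, hsqD, hsqσD]
  constructor <;> rintro ⟨hl, hr⟩ <;> constructor <;> linarith

theorem sq_mem_spInterval (hD : 0 < D) (hDσ : D < σ ^ 2) : σ ^ 2 ∈ spInterval σ D := by
  have : 0 < σ ^ 2 - D := sub_pos.2 hDσ
  rw [mem_spInterval_iff hD.le hDσ.le, sub_self, zero_pow two_ne_zero]
  positivity

theorem one_sub_sq_div_eq (hp : p ≠ 0) (hσD : σ ^ 2 - D ≠ 0) :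
    1 - (p + σ ^ 2 - 2 * D) ^ 2 / (4 * p * (σ ^ 2 - D)) =
      (4 * D * (σ ^ 2 - D) - (p - σ ^ 2) ^ 2) / (4 * (σ ^ 2 - D) * p) := by
  field_simp
  ring

theorem Rsp_eqOn_spInterval (hD : 0 ≤ D) (hDσ : D < σ ^ 2) :
    EqOn (Rsp σ D)
      (fun p ↦ (Real.log (4 * (σ ^ 2 - D) * p) -
        Real.log (4 * D * (σ ^ 2 - D) - (p - σ ^ 2) ^ 2)) / 2)
      (spInterval σ D) := by
  intro p hp
  have hp₀ : p ≠ 0 := (pos_of_mem_spInterval hp).ne'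
  have hσD : σ ^ 2 - D ≠ 0 := (sub_pos.2 hDσ).ne'
  have hnum := sub_pos.2 ((mem_spInterval_iff hD hDσ.le).1 hp)
  rw [Rsp, one_sub_sq_div_eq hp₀ hσD, Real.log_div hnum.ne' (by positivity)]
  ring

theorem Rsp_sq (hD : 0 < D) (hDσ : D < σ ^ 2) :
    Rsp σ D (σ ^ 2) = 1 / 2 * Real.log (σ ^ 2 / D) := by
  have hσD : 4 * (σ ^ 2 - D) ≠ 0 := mul_ne_zero four_ne_zero (sub_pos.2 hDσ).ne'
  have hσ : σ ^ 2 ≠ 0 := (hD.trans hDσ).ne'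
  have hnum : 4 * D * (σ ^ 2 - D) - (σ ^ 2 - σ ^ 2) ^ 2 = 4 * (σ ^ 2 - D) * D := by ring
  rw [Rsp_eqOn_spInterval hD.le hDσ (sq_mem_spInterval hD hDσ)]
  beta_reduce
  rw [hnum, Real.log_mul hσD hσ, Real.log_mul hσD hD.ne', Real.log_div hσ hD.ne']
  ring

theorem analyticAt_Rsp (hD : 0 ≤ D) (hDσ : D < σ ^ 2) (hp : p ∈ spInterval σ D) :
    AnalyticAt ℝ (Rsp σ D) p := by
  have hp₀ := pos_of_mem_spInterval hp
  have hσD : 0 < σ ^ 2 - D := sub_pos.2 hDσ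
  have hnum := sub_pos.2 ((mem_spInterval_iff hD hDσ.le).1 hp)
  refine AnalyticAt.congr ?_
    ((Rsp_eqOn_spInterval hD hDσ).symm.eventuallyEq_of_mem (isOpen_spInterval.mem_nhds hp))
  have hlogp : AnalyticAt ℝ (fun q ↦ Real.log (4 * (σ ^ 2 - D) * q)) p :=
    AnalyticAt.log (by fun_prop) (mul_pos (mul_pos four_pos hσD) hp₀)
  have hlognum : AnalyticAt ℝ (fun q ↦ Real.log (4 * D * (σ ^ 2 - D) - (q - σ ^ 2) ^ 2)) p :=
    AnalyticAt.log (by fun_prop) hnum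
  exact (hlogp.sub hlognum).div_const

theorem hasDerivAt_Rsp (hD : 0 ≤ D) (hDσ : D < σ ^ 2) (hp : p ∈ spInterval σ D) :
    HasDerivAt (Rsp σ D)
      (1 / (2 * p) + (p - σ ^ 2) / (4 * D * (σ ^ 2 - D) - (p - σ ^ 2) ^ 2)) p := by
  have hp₀ : p ≠ 0 := (pos_of_mem_spInterval hp).ne'
  have hσD : σ ^ 2 - D ≠ 0 := (sub_pos.2 hDσ).ne'
  have hnum := (sub_pos.2 ((mem_spInterval_iff hD hDσ.le).1 hp)).ne'
  have hlogp := ((hasDerivAt_id p).const_mul (4 * (σ ^ 2 - D))).log (by simp [hp₀, hσD])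
  have hlognum :=
    ((((hasDerivAt_id p).sub_const (σ ^ 2)).pow 2).const_sub (4 * D * (σ ^ 2 - D))).log hnum
  refine HasDerivAt.congr_of_eventuallyEq ?_
    ((Rsp_eqOn_spInterval hD hDσ).eventuallyEq_of_mem (isOpen_spInterval.mem_nhds hp))
  convert! (hlogp.sub hlognum).div_const 2 using 1
  simp only [id_eq, Pi.pow_apply]
  field_simp
  ring

theorem hasDerivAt_Rsp_sq (hD : 0 < D) (hDσ : D < σ ^ 2) :
    HasDerivAt (Rsp σ D) (1 / (2 * σ ^ 2)) (σ ^ 2) := by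
  simpa only [sub_self, zero_div, add_zero] using
    hasDerivAt_Rsp hD.le hDσ (sq_mem_spInterval hD hDσ)

theorem isBigO_Rsp_sub (hD : 0 < D) (hDσ : D < σ ^ 2) :
    (fun p ↦ Rsp σ D p - (1 / 2) * Real.log (σ ^ 2 / D) - (p - σ ^ 2) / (2 * σ ^ 2))
      =O[𝓝 (σ ^ 2)] fun p ↦ (p - σ ^ 2) ^ 2 := by
  have htaylor := isBigO_sub_sub_fderiv_of_analyticAt
    (analyticAt_Rsp hD.le hDσ (sq_mem_spInterval hD hDσ)) (hasDerivAt_Rsp_sq hD hDσ).hasFDerivAt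
  simpa only [Rsp_sq hD hDσ, ContinuousLinearMap.toSpanSingleton_apply, smul_eq_mul,
    mul_one_div, Real.norm_eq_abs, sq_abs] using htaylor

end

theorem stmt8 (σ D : ℝ) (hσ : 0 < σ) (hD : 0 < D) (hDσ : D < σ ^ 2) :
    ∃ δ > (0 : ℝ), ∃ C > (0 : ℝ), ∀ p : ℝ, |p - σ ^ 2| < δ →
      ((Real.sqrt (σ ^ 2 - D) - Real.sqrt D) ^ 2 < p ∧
        p < (Real.sqrt (σ ^ 2 - D) + Real.sqrt D) ^ 2) ∧
      |Rsp σ D p - (1 / 2) * Real.log (σ ^ 2 / D) - (p - σ ^ 2) / (2 * σ ^ 2)| ≤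
        C * (p - σ ^ 2) ^ 2 := by
  obtain ⟨C, hC, hbound⟩ := (isBigO_Rsp_sub hD hDσ).exists_pos
  have hmem : ∀ᶠ p in 𝓝 (σ ^ 2), p ∈ spInterval σ D :=
    isOpen_spInterval.mem_nhds (sq_mem_spInterval hD hDσ)
  obtain ⟨δ, hδ, hball⟩ := Metric.eventually_nhds_iff.1 (hmem.and hbound.bound)
  refine ⟨δ, hδ, C, hC, fun p hp ↦ ?_⟩
  obtain ⟨hpI, hpC⟩ := hball hp
  rw [Real.norm_eq_abs, Real.norm_of_nonneg (sq_nonneg _)] at hpC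
  exact ⟨hpI, hpC⟩
end

section
/- Monotonicity of the spherical non-excess-distortion probability: for every integer k ≥ 1 and all real numbers p, p' with |σ²−2D| ≤ p ≤ p', one has Ψ_sp(k,p') ≤ Ψ_sp(k,p). -/
open MeasureTheory Metric

/-!
If `y = t • z` with `0 ≤ t ≤ 1`, Stewart's identity writes `‖y - x‖²` as the average, with weights
`t` and `1 - t`, of `‖z - x‖²` and `‖x‖² - t‖z‖²`. The latter is at most `R` as soon as
`‖x‖² ≤ ‖y‖² + R`, because `‖y‖² = t²‖z‖² ≤ t‖z‖²`; hence `‖z - x‖² ≤ R` forces `‖y - x‖² ≤ R`.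
For `‖x‖² = k(σ² - D)`, `‖y‖² = kp` and `R = kD` the condition reads `σ² - 2D ≤ p`: in this range,
shrinking the source vector only enlarges the spherical cap of points within distortion `D`.
-/

section InnerProductSpace

variable {E : Type*} [NormedAddCommGroup E] [InnerProductSpace ℝ E]

lemma norm_smul_sub_sq (t : ℝ) (x z : E) :
    ‖t • z - x‖ ^ 2 = t * ‖z - x‖ ^ 2 + (1 - t) * (‖x‖ ^ 2 - t * ‖z‖ ^ 2) := by
  rw [norm_sub_sq_real, norm_sub_sq_real, real_inner_smul_left, norm_smul, mul_pow,
    Real.norm_eq_abs, sq_abs]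
  ring

lemma norm_sub_sq_le_of_mem_segment_zero {x y z : E} {R : ℝ} (hy : y ∈ segment ℝ 0 z)
    (hxy : ‖x‖ ^ 2 ≤ ‖y‖ ^ 2 + R) (hzx : ‖z - x‖ ^ 2 ≤ R) : ‖y - x‖ ^ 2 ≤ R := by
  obtain ⟨t, ⟨ht0, ht1⟩, rfl⟩ : ∃ t ∈ Set.Icc (0 : ℝ) 1, t • z = y := by
    simpa [segment_eq_image] using hy
  have hnorm : ‖t • z‖ ^ 2 ≤ t * ‖z‖ ^ 2 := by
    rw [norm_smul, mul_pow, Real.norm_of_nonneg ht0]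
    gcongr
    exact pow_le_of_le_one ht0 ht1 two_ne_zero
  calc ‖t • z - x‖ ^ 2
      = t * ‖z - x‖ ^ 2 + (1 - t) * (‖x‖ ^ 2 - t * ‖z‖ ^ 2) := norm_smul_sub_sq t x z
    _ ≤ t * R + (1 - t) * R := by
      have hsub : ‖x‖ ^ 2 - t * ‖z‖ ^ 2 ≤ R := by linarith
      gcongr
    _ = R := by ring

lemma measure_norm_sub_sq_le_le_of_mem_segment_zero [MeasurableSpace E] {μ : Measure E} {y z : E}
    {R : ℝ} (hy : y ∈ segment ℝ 0 z) (hμ : ∀ᵐ x ∂μ, ‖x‖ ^ 2 ≤ ‖y‖ ^ 2 + R) :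
    μ {x | ‖z - x‖ ^ 2 ≤ R} ≤ μ {x | ‖y - x‖ ^ 2 ≤ R} :=
  measure_mono_ae (hμ.mono fun _ hx => norm_sub_sq_le_of_mem_segment_zero hy hx)

end InnerProductSpace

section ConstantVector

variable {ι : Type*}

lemma norm_sq_equiv_symm_const [Fintype ι] (c : ℝ) :
    ‖(EuclideanSpace.equiv ι ℝ).symm (fun _ => c)‖ ^ 2 = Fintype.card ι * c ^ 2 := by
  simp [EuclideanSpace.norm_sq_eq]

lemma equiv_symm_const_mem_segment_zero {c d : ℝ} (hc : 0 ≤ c) (hcd : c ≤ d) :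
    (EuclideanSpace.equiv ι ℝ).symm (fun _ => c) ∈
      segment ℝ 0 ((EuclideanSpace.equiv ι ℝ).symm (fun _ => d)) := by
  obtain ⟨a, b, ha, hb, hab, hc_eq⟩ : c ∈ segment ℝ 0 d := by
    rw [segment_eq_Icc (hc.trans hcd)]
    exact ⟨hc, hcd⟩
  refine ⟨a, b, ha, hb, hab, ?_⟩
  ext i
  simpa using hc_eq

end ConstantVector

lemma isProbabilityMeasure_sphereUniform {k : ℕ} (hk : 1 ≤ k) (r : ℝ) :
    IsProbabilityMeasure (sphereUniform k r) := by
  have : Nonempty (Fin k) := ⟨⟨0, hk⟩⟩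
  have : NeZero (volume : Measure (EuclideanSpace ℝ (Fin k))).toSphere :=
    ⟨Measure.toSphere_ne_zero _⟩
  rw [sphereUniform, ← Measure.map_smul]
  exact Measure.isProbabilityMeasure_map (by fun_prop)

lemma ae_norm_eq_abs_sphereUniform (k : ℕ) (r : ℝ) : ∀ᵐ x ∂sphereUniform k r, ‖x‖ = |r| := by
  refine Measure.ae_smul_measure ?_ _
  rw [ae_map_iff (by fun_prop) (measurableSet_eq_fun (by fun_prop) (by fun_prop))]
  exact .of_forall fun x => by rw [norm_smul, norm_eq_of_mem_sphere, mul_one, Real.norm_eq_abs]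

theorem stmt15_general {σ D : ℝ} (hDσ : D ≤ σ ^ 2) {k : ℕ} (hk : 1 ≤ k) {p p' : ℝ}
    (hp0 : 0 ≤ p) (hp : σ ^ 2 - 2 * D ≤ p) (hpp' : p ≤ p') :
    PsiSp σ D k p' ≤ PsiSp σ D k p := by
  have := isProbabilityMeasure_sphereUniform hk √(k * (σ ^ 2 - D))
  refine ENNReal.toReal_mono (measure_ne_top _ _) ?_
  apply measure_norm_sub_sq_le_le_of_mem_segment_zero
  · exact equiv_symm_const_mem_segment_zero (Real.sqrt_nonneg p) (Real.sqrt_le_sqrt hpp')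
  · filter_upwards [ae_norm_eq_abs_sphereUniform k √(k * (σ ^ 2 - D))] with x hx
    calc ‖x‖ ^ 2 = k * (σ ^ 2 - D) := by
          rw [hx, sq_abs, Real.sq_sqrt (mul_nonneg k.cast_nonneg (sub_nonneg.2 hDσ))]
      _ ≤ k * (p + D) := by gcongr; linarith
      _ = _ := by rw [norm_sq_equiv_symm_const, Fintype.card_fin, Real.sq_sqrt hp0, mul_add]

theorem stmt15 (σ D : ℝ) (hσ : 0 < σ) (hD : 0 < D) (hDσ : D < σ ^ 2)
    (k : ℕ) (hk : 1 ≤ k) (p p' : ℝ)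
    (hp : |σ ^ 2 - 2 * D| ≤ p) (hpp' : p ≤ p') :
    PsiSp σ D k p' ≤ PsiSp σ D k p :=
  stmt15_general hDσ.le hk ((abs_nonneg _).trans hp) ((le_abs_self _).trans hp) hpp'
end

section
/- Monotonicity of the i.i.d.-Gaussian non-excess-distortion probability: for every integer k ≥ 1 and all real numbers p, p' with |σ²−2D| ≤ p ≤ p', one has Ψ_iid(k,p') ≤ Ψ_iid(k,p). -/
/-!
For `‖a‖ ≤ ‖b‖`, the reflection in the perpendicular bisector of `a` and `b` swaps the balls
of radius `r` about `a` and `b`. Since the origin lies on the side of `a`, points of the ball about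
`b` that are missed by the ball about `a` get closer to the origin, so a density which decreases
with the norm gives the ball about `b` at most the mass of the ball about `a`. The i.i.d. centered
Gaussian vector has such a density, and the event of distortion at most `D` is a ball of radius
`√(k D)` about the source vector.
-/

open MeasureTheory ProbabilityTheory

/-- `Ψ_iid(k,p)`: the probability that a random vector `Ŝ ∈ ℝ^k` with i.i.d. coordinates
distributed as `N(0, σ²-D)` satisfies `(1/k)‖s - Ŝ‖² ≤ D`, where `s` is a fixed vector with
`‖s‖² = kp` (here the constant vector with entries `√p`). -/
noncomputable def PsiIid (σ D : ℝ) (k : ℕ) (p : ℝ) : ℝ :=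
  ((Measure.pi fun _ : Fin k => gaussianReal 0 (Real.toNNReal (σ ^ 2 - D)))
    {x : Fin k → ℝ | ∑ i, (Real.sqrt p - x i) ^ 2 ≤ k * D}).toReal

open Metric EuclideanGeometry AffineSubspace WithLp
open scoped ENNReal NNReal Real RealInnerProductSpace

section PerpBisector

variable {E : Type*} [NormedAddCommGroup E] [InnerProductSpace ℝ E] (a b : E)

instance nonempty_perpBisector : Nonempty (perpBisector a b) :=
  perpBisector_nonempty.to_subtype

theorem two_mul_inner_sub_midpoint (x : E) :
    2 * ⟪b - a, x - midpoint ℝ a b⟫ = 2 * ⟪b - a, x⟫ - (‖b‖ ^ 2 - ‖a‖ ^ 2) := by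
  have h : ⟪b - a, a + b⟫ = ‖b‖ ^ 2 - ‖a‖ ^ 2 := by
    rw [← real_inner_self_eq_norm_sq, ← real_inner_self_eq_norm_sq, inner_sub_left,
      inner_add_right, inner_add_right, real_inner_comm]
    ring
  rw [midpoint_eq_smul_add, invOf_eq_inv, inner_sub_right, real_inner_smul_right, h]
  ring

theorem two_mul_inner_sub_midpoint_eq_dist_sq_sub (x : E) :
    2 * ⟪b - a, x - midpoint ℝ a b⟫ = dist x a ^ 2 - dist x b ^ 2 := by
  rw [two_mul_inner_sub_midpoint, dist_eq_norm, dist_eq_norm, norm_sub_sq_real, norm_sub_sq_real,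
    inner_sub_left, real_inner_comm, real_inner_comm x a]
  ring

variable [(perpBisector a b).direction.HasOrthogonalProjection]

theorem reflection_perpBisector_apply (x : E) :
    reflection (perpBisector a b) x =
      x - (2 * (⟪b - a, x - midpoint ℝ a b⟫ / ‖b - a‖ ^ 2)) • (b - a) := by
  rw [reflection_apply_of_mem _ _ (midpoint_mem_perpBisector a b)]
  simp only [direction_perpBisector, Submodule.reflection_orthogonal_apply,
    Submodule.reflection_singleton_apply, vsub_eq_sub, vadd_eq_add, RCLike.ofReal_real_eq_id, id]
  module

theorem reflection_perpBisector_left : reflection (perpBisector a b) a = b := by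
  have ha : a - midpoint ℝ a b ∈ (perpBisector a b).directionᗮ := by
    rw [direction_perpBisector, Submodule.orthogonal_orthogonal, left_sub_midpoint,
      vsub_eq_sub, ← neg_sub b a, smul_neg]
    exact neg_mem (Submodule.smul_mem _ _ (Submodule.mem_span_singleton_self _))
  rw [reflection_apply_of_mem _ _ (midpoint_mem_perpBisector a b), vsub_eq_sub,
    Submodule.reflection_mem_subspace_orthogonalComplement_eq_neg ha, vadd_eq_add, neg_sub,
    sub_add_eq_add_sub, midpoint_add_self, add_sub_cancel_left]

theorem reflection_perpBisector_right : reflection (perpBisector a b) b = a :=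
  ((reflection_involutive _).eq_iff.mp (reflection_perpBisector_left a b)).symm

theorem norm_sq_reflection_perpBisector (x : E) :
    ‖reflection (perpBisector a b) x‖ ^ 2 = ‖x‖ ^ 2 -
      2 * (⟪b - a, x - midpoint ℝ a b⟫ / ‖b - a‖ ^ 2) * (‖b‖ ^ 2 - ‖a‖ ^ 2) := by
  rcases eq_or_ne a b with rfl | hab
  · rw [reflection_perpBisector_apply]
    simp only [sub_self, smul_zero, mul_zero, sub_zero]
  have hab' : ‖b - a‖ ^ 2 ≠ 0 := pow_ne_zero 2 (norm_ne_zero_iff.mpr (sub_ne_zero.mpr hab.symm))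
  set t := 2 * (⟪b - a, x - midpoint ℝ a b⟫ / ‖b - a‖ ^ 2) with ht
  have ht_mul : t * ‖b - a‖ ^ 2 = 2 * ⟪b - a, x⟫ - (‖b‖ ^ 2 - ‖a‖ ^ 2) := by
    rw [← two_mul_inner_sub_midpoint, ht, mul_assoc, div_mul_cancel₀ _ hab']
  calc ‖reflection (perpBisector a b) x‖ ^ 2
      = ‖x‖ ^ 2 - t * (2 * ⟪b - a, x⟫ - t * ‖b - a‖ ^ 2) := by
        rw [reflection_perpBisector_apply, ← ht, norm_sub_sq_real, real_inner_smul_right,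
          norm_smul, mul_pow, Real.norm_eq_abs, sq_abs, real_inner_comm]
        ring
    _ = ‖x‖ ^ 2 - t * (‖b‖ ^ 2 - ‖a‖ ^ 2) := by rw [ht_mul, sub_sub_cancel]

variable {a b}

theorem norm_reflection_perpBisector_le {x : E} (hab : ‖a‖ ≤ ‖b‖) (hx : dist x b ≤ dist x a) :
    ‖reflection (perpBisector a b) x‖ ≤ ‖x‖ := by
  have hx_side : 0 ≤ ⟪b - a, x - midpoint ℝ a b⟫ := by
    have h := pow_le_pow_left₀ dist_nonneg hx 2
    linarith [two_mul_inner_sub_midpoint_eq_dist_sq_sub a b x]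
  have hab_sq : 0 ≤ ‖b‖ ^ 2 - ‖a‖ ^ 2 :=
    sub_nonneg.mpr (pow_le_pow_left₀ (norm_nonneg a) hab 2)
  refine le_of_sq_le_sq ?_ (norm_nonneg x)
  rw [norm_sq_reflection_perpBisector]
  exact sub_le_self _ (by positivity)

end PerpBisector

section Measure

theorem measure_le_of_measure_sdiff_le {α : Type*} [MeasurableSpace α] {μ : Measure α}
    {s t : Set α} (hs : MeasurableSet s) (ht : MeasurableSet t) (h : μ (s \ t) ≤ μ (t \ s)) :
    μ s ≤ μ t := by
  rw [← measure_inter_add_sdiff s ht, ← measure_inter_add_sdiff t hs, Set.inter_comm]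
  gcongr

variable {E F : Type*} [NormedAddCommGroup E] [InnerProductSpace ℝ E] [FiniteDimensional ℝ E]
  [MeasurableSpace E] [BorelSpace E] [NormedAddCommGroup F] [InnerProductSpace ℝ F]
  [FiniteDimensional ℝ F] [MeasurableSpace F] [BorelSpace F]

theorem measurePreserving_affineIsometryEquiv (e : E ≃ᵃⁱ[ℝ] F) : MeasurePreserving e := by
  have h : ⇑e = (· + e 0) ∘ e.linearIsometryEquiv := by
    ext x
    simpa using e.map_vadd 0 x
  rw [h]
  exact (measurePreserving_add_right volume (e 0)).comp e.linearIsometryEquiv.measurePreserving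

theorem withDensity_closedBall_le_of_norm_le {f : E → ℝ≥0∞}
    (hf : ∀ ⦃x y⦄, ‖x‖ ≤ ‖y‖ → f y ≤ f x) {a b : E} (hab : ‖a‖ ≤ ‖b‖) (r : ℝ) :
    volume.withDensity f (closedBall b r) ≤ volume.withDensity f (closedBall a r) := by
  set R := reflection (perpBisector a b)
  have hR_left (x : E) : dist (R x) b = dist x a := by
    rw [← R.dist_map x a, reflection_perpBisector_left]
  have hR_right (x : E) : dist (R x) a = dist x b := by
    rw [← R.dist_map x b, reflection_perpBisector_right]
  have hR_swap : R ⁻¹' (closedBall a r \ closedBall b r) = closedBall b r \ closedBall a r := by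
    ext x
    simp [hR_left, hR_right]
  have hR_le : ∀ x ∈ closedBall b r \ closedBall a r, f x ≤ f (R x) := fun x hx ↦
    hf <| norm_reflection_perpBisector_le hab <|
      (mem_closedBall.mp hx.1).trans (not_le.mp (mt mem_closedBall.mpr hx.2)).le
  refine measure_le_of_measure_sdiff_le measurableSet_closedBall measurableSet_closedBall ?_
  rw [withDensity_apply _ (measurableSet_closedBall.diff measurableSet_closedBall),
    withDensity_apply _ (measurableSet_closedBall.diff measurableSet_closedBall)]
  calc ∫⁻ x in closedBall b r \ closedBall a r, f x
      ≤ ∫⁻ x in closedBall b r \ closedBall a r, f (R x) :=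
        setLIntegral_mono' (measurableSet_closedBall.diff measurableSet_closedBall) hR_le
    _ = ∫⁻ x in closedBall a r \ closedBall b r, f x := by
        rw [← hR_swap, (measurePreserving_affineIsometryEquiv R).setLIntegral_comp_preimage_emb
          R.toHomeomorph.measurableEmbedding]

end Measure

section PiWithDensity

variable {ι : Type*} {X : ι → Type*} [∀ i, MeasurableSpace (X i)]
  {μ : ∀ i, Measure (X i)} [∀ i, SigmaFinite (μ i)] {f : ∀ i, X i → ℝ≥0∞}

theorem lmarginal_const_mul_prod [DecidableEq ι] (hf : ∀ i, Measurable (f i)) (s : Finset ι)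
    (c : ℝ≥0∞) :
    ∫⋯∫⁻_s, (fun x ↦ c * ∏ i ∈ s, f i (x i)) ∂μ = fun _ ↦ c * ∏ i ∈ s, ∫⁻ y, f i y ∂μ i := by
  induction s using Finset.induction generalizing c with
  | empty => simp
  | insert i s hi ih =>
    rw [lmarginal_insert' _ (by fun_prop) hi, Finset.prod_insert hi, ← mul_assoc, ← ih]
    congr 1
    ext x
    have h (y : X i) : ∏ j ∈ s, f j (Function.update x i y j) = ∏ j ∈ s, f j (x j) :=
      Finset.prod_congr rfl fun j hj ↦ by rw [Function.update_of_ne (ne_of_mem_of_not_mem hj hi)]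
    simp only [Finset.prod_insert hi, Function.update_self, h, mul_left_comm c, mul_assoc]
    rw [lintegral_mul_const _ (hf i)]

variable [Fintype ι]

theorem lintegral_pi_prod (hf : ∀ i, Measurable (f i)) :
    ∫⁻ x, ∏ i, f i (x i) ∂Measure.pi μ = ∏ i, ∫⁻ y, f i y ∂μ i := by
  classical
  rcases isEmpty_or_nonempty (∀ i, X i) with hX | ⟨⟨x⟩⟩
  · obtain ⟨i, hi⟩ := isEmpty_pi.mp hX
    rw [lintegral_of_isEmpty, Finset.prod_eq_zero (Finset.mem_univ i) (lintegral_of_isEmpty _ _)]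
  · simpa using congr_fun (lmarginal_const_mul_prod (μ := μ) hf Finset.univ 1) x

theorem pi_withDensity [∀ i, SigmaFinite ((μ i).withDensity (f i))] (hf : ∀ i, Measurable (f i)) :
    Measure.pi (fun i ↦ (μ i).withDensity (f i)) =
      (Measure.pi μ).withDensity fun x ↦ ∏ i, f i (x i) := by
  classical
  refine Measure.pi_eq fun s hs ↦ ?_
  have h (x : ∀ i, X i) : (Set.univ.pi s).indicator (fun x ↦ ∏ i, f i (x i)) x =
      ∏ i, (s i).indicator (f i) (x i) := by
    simp [Set.indicator_apply, Finset.prod_ite_zero]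
  rw [withDensity_apply _ (.univ_pi hs), ← lintegral_indicator (.univ_pi hs), lintegral_congr h,
    lintegral_pi_prod fun i ↦ (hf i).indicator (hs i)]
  simp only [lintegral_indicator (hs _), withDensity_apply _ (hs _)]

end PiWithDensity

section Gaussian

variable {ι : Type*} [Fintype ι]

theorem prod_gaussianPDF_zero_eq (v : ℝ≥0) (x : EuclideanSpace ℝ ι) :
    ∏ i, gaussianPDF 0 v (x i) =
      .ofReal ((√(2 * π * v))⁻¹ ^ Fintype.card ι * .exp (-‖x‖ ^ 2 / (2 * v))) := by
  simp only [gaussianPDF]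
  rw [← ENNReal.ofReal_prod_of_nonneg fun i _ ↦ gaussianPDFReal_nonneg 0 v (x i)]
  simp only [gaussianPDFReal, sub_zero, Finset.prod_mul_distrib, Finset.prod_const,
    Finset.card_univ, ← Real.exp_sum, ← Finset.sum_div, Finset.sum_neg_distrib,
    EuclideanSpace.real_norm_sq_eq]

theorem prod_gaussianPDF_zero_le_of_norm_le (v : ℝ≥0) {x y : EuclideanSpace ℝ ι}
    (h : ‖x‖ ≤ ‖y‖) : ∏ i, gaussianPDF 0 v (y i) ≤ ∏ i, gaussianPDF 0 v (x i) := by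
  rw [prod_gaussianPDF_zero_eq, prod_gaussianPDF_zero_eq]
  gcongr

theorem pi_gaussianReal_eq_withDensity (m : ι → ℝ) {v : ι → ℝ≥0} (hv : ∀ i, v i ≠ 0) :
    Measure.pi (fun i ↦ gaussianReal (m i) (v i)) =
      volume.withDensity fun x ↦ ∏ i, gaussianPDF (m i) (v i) (x i) := by
  have (i : ι) : SigmaFinite (volume.withDensity (gaussianPDF (m i) (v i))) := by
    rw [← gaussianReal_of_var_ne_zero (m i) (hv i)]
    infer_instance
  simp only [gaussianReal_of_var_ne_zero _ (hv _)]
  exact pi_withDensity fun i ↦ measurable_gaussianPDF (m i) (v i)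

theorem map_toLp_pi_gaussianReal_eq_withDensity (m : ι → ℝ) {v : ι → ℝ≥0} (hv : ∀ i, v i ≠ 0) :
    (Measure.pi fun i ↦ gaussianReal (m i) (v i)).map (toLp 2) =
      (volume : Measure (EuclideanSpace ℝ ι)).withDensity
        fun x ↦ ∏ i, gaussianPDF (m i) (v i) (x i) := by
  ext s hs
  have htoLp : Measurable (toLp 2 : (ι → ℝ) → EuclideanSpace ℝ ι) := by fun_prop
  rw [Measure.map_apply htoLp hs, pi_gaussianReal_eq_withDensity m hv,
    withDensity_apply _ (htoLp hs), withDensity_apply _ hs,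
    ← (PiLp.volume_preserving_toLp ι).setLIntegral_comp_preimage_emb
      (MeasurableEquiv.toLp 2 (ι → ℝ)).measurableEmbedding]

theorem map_toLp_pi_gaussianReal_closedBall_le {v : ℝ≥0} (hv : v ≠ 0) {a b : EuclideanSpace ℝ ι}
    (hab : ‖a‖ ≤ ‖b‖) (r : ℝ) :
    (Measure.pi fun _ : ι ↦ gaussianReal 0 v).map (toLp 2) (closedBall b r) ≤
      (Measure.pi fun _ : ι ↦ gaussianReal 0 v).map (toLp 2) (closedBall a r) := by
  rw [map_toLp_pi_gaussianReal_eq_withDensity _ fun _ ↦ hv]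
  exact withDensity_closedBall_le_of_norm_le
    (fun _ _ ↦ prod_gaussianPDF_zero_le_of_norm_le v) hab r

end Gaussian

theorem PsiIid_eq_map_closedBall (σ p : ℝ) {D : ℝ} (hD : 0 ≤ D) (k : ℕ) :
    PsiIid σ D k p = ((Measure.pi fun _ : Fin k ↦ gaussianReal 0 (σ ^ 2 - D).toNNReal).map (toLp 2)
      (closedBall (toLp 2 fun _ ↦ √p) √(k * D))).toReal := by
  rw [Measure.map_apply (by fun_prop) measurableSet_closedBall, PsiIid]
  congr 2
  ext x
  simp only [Set.mem_ofPred_eq, Set.mem_preimage, mem_closedBall', EuclideanSpace.dist_eq,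
    Real.dist_eq, sq_abs]
  exact (Real.sqrt_le_sqrt_iff (by positivity)).symm

theorem stmt16_general {σ D : ℝ} (hD : 0 ≤ D) (hDσ : D < σ ^ 2) (k : ℕ) :
    AntitoneOn (PsiIid σ D k) (Set.Ici 0) := by
  intro p _ p' _ hpp'
  have hv : (σ ^ 2 - D).toNNReal ≠ 0 := (Real.toNNReal_pos.mpr (sub_pos.mpr hDσ)).ne'
  have hnorm : ‖toLp 2 fun _ : Fin k ↦ √p‖ ≤ ‖toLp 2 fun _ : Fin k ↦ √p'‖ := by
    simp only [EuclideanSpace.norm_eq, Real.norm_of_nonneg (Real.sqrt_nonneg _)]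
    gcongr
  rw [PsiIid_eq_map_closedBall σ p hD, PsiIid_eq_map_closedBall σ p' hD]
  exact ENNReal.toReal_mono (by finiteness) (map_toLp_pi_gaussianReal_closedBall_le hv hnorm _)

theorem stmt16 (σ D : ℝ) (hσ : 0 < σ) (hD : 0 < D) (hDσ : D < σ ^ 2)
    (k : ℕ) (hk : 1 ≤ k) (p p' : ℝ)
    (hp : |σ ^ 2 - 2 * D| ≤ p) (hpp' : p ≤ p') :
    PsiIid σ D k p' ≤ PsiIid σ D k p := by
  have hp₀ : 0 ≤ p := (abs_nonneg _).trans hp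
  exact stmt16_general hD.le hDσ k hp₀ (hp₀.trans hpp') hpp'
end
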